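/- Let K = k(x, y) be a radical function field with y^n = D ∈ k(x)^*, n coprime to char k, Y^n - D irreducible over k(x), and squarefree decomposition D = sgn(D)·∏_j f_j^j. Then the degree over k of the exact constant field k' of K equals gcd(n, {j ∈ ℤ : f_j ≠ 1}), and k' = k(sgn(D)^{1/[k':k]}) is generated over k by a [k':k]-th root of sgn(D). -/

import Mathlib

/-!
Let `k'` be the algebraic closure of `k` in `K` and put `g = gcd(n, {j : f_j ≠ 1})`.

Since `g` divides every relevant exponent, `D = sgn(D) h ^ g` with `h ∈ k(x)`, so
`t = y ^ (n / g) / h` satisfies `t ^ g = sgn(D)`. Irreducibility of `Y ^ n - D` descends to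
`Y ^ g - sgn(D)` over `k`, whence `[k(t) : k] = g`.

Conversely let `e = [k' : k] = [k'(x) : k(x)]`, which divides `n`. The norm of `y` to `k'(x)`
differs from `y ^ (n / e)` by an `n`-th root of unity, which lies in `k'`; hence `D` is an `e`-th
power in `k'(x)`. Over an algebraic closure of `k'`, a root of `f_j` has multiplicity in `f_j` a
power of the characteristic exponent, so comparing orders at that root gives `e ∣ j`, as `e` is
prime to the characteristic. Thus `e ∣ g`, and `k(t) ⊆ k'` forces `k' = k(t)`.
-/

open Polynomial WithZero IsDedekindDomain

section Kummer

open IntermediateField Module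

variable {F K : Type*} [Field F] [Field K] [Algebra F K]

theorem irreducible_X_pow_sub_C_of_dvd {n g : ℕ} {D : F}
    (hirr : Irreducible (X ^ n - C D)) (hgn : g ∣ n) : Irreducible (X ^ g - C D) := by
  obtain ⟨s, rfl⟩ := hgn
  have hs : s ≠ 0 := right_ne_zero_of_mul (ne_zero_of_irreducible_X_pow_sub_C hirr)
  refine of_irreducible_expand hs ?_
  rwa [map_sub, map_pow, expand_X, expand_C, ← pow_mul, mul_comm s g]

theorem irreducible_X_pow_sub_C_of_mul_pow {g : ℕ} {a h : F} (hh : h ≠ 0)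
    (hirr : Irreducible (X ^ g - C (a * h ^ g))) : Irreducible (X ^ g - C a) := by
  let : Invertible h := invertibleOfNonzero hh
  have hscale : algEquivCMulXAddC h 0 (X ^ g - C (a * h ^ g)) = C (h ^ g) * (X ^ g - C a) := by
    rw [algEquivCMulXAddC_apply, C_0, add_zero, map_sub, map_pow, aeval_X, aeval_C, algebraMap_eq,
      mul_pow, mul_sub, ← C_pow, ← C_mul, mul_comm a]
  have hunit : IsUnit (C (h ^ g)) := isUnit_C.2 (pow_ne_zero g hh).isUnit
  rw [← irreducible_isUnit_mul hunit, ← hscale]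
  exact (MulEquiv.irreducible_iff (algEquivCMulXAddC h 0)).2 hirr

theorem minpoly_eq_X_pow_sub_C {n : ℕ} {D : F} {y : K}
    (hirr : Irreducible (X ^ n - C D)) (hy : y ^ n = algebraMap F K D) :
    minpoly F y = X ^ n - C D :=
  (minpoly.eq_of_irreducible_of_monic hirr (by simp [hy])
    (monic_X_pow_sub_C D (ne_zero_of_irreducible_X_pow_sub_C hirr))).symm

theorem finrank_adjoin_of_irreducible_X_pow_sub_C {n : ℕ} {D : F} {y : K}
    (hirr : Irreducible (X ^ n - C D)) (hy : y ^ n = algebraMap F K D) :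
    finrank F F⟮y⟯ = n := by
  have hmin := minpoly_eq_X_pow_sub_C hirr hy
  have hint : IsIntegral F y := minpoly.ne_zero_iff.1 (hmin ▸ hirr.ne_zero)
  rw [adjoin.finrank hint, hmin, natDegree_X_pow_sub_C]

theorem finrank_eq_of_adjoin_eq_top {n : ℕ} {D : F} {y : K}
    (hirr : Irreducible (X ^ n - C D)) (hy : y ^ n = algebraMap F K D)
    (hgen : Algebra.adjoin F {y} = ⊤) : finrank F K = n := by
  have htop : F⟮y⟯ = ⊤ := adjoin_eq_top_of_algebra F _ hgen
  rw [← finrank_top', ← htop, finrank_adjoin_of_irreducible_X_pow_sub_C hirr hy]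

theorem exists_pow_eq_and_finrank_adjoin_eq {k : Type*} [Field k] [Algebra k F] [Algebra k K]
    [IsScalarTower k F K] {n g : ℕ} {D h : F} {a : k} {y : K}
    (hirr : Irreducible (X ^ n - C D)) (hy : y ^ n = algebraMap F K D) (hgn : g ∣ n)
    (hh : h ≠ 0) (hD : D = algebraMap k F a * h ^ g) :
    ∃ t : K, t ^ g = algebraMap k K a ∧ finrank k k⟮t⟯ = g := by
  have hg : g ≠ 0 := ne_zero_of_dvd_ne_zero (ne_zero_of_irreducible_X_pow_sub_C hirr) hgn
  have hirrF : Irreducible (X ^ g - C (algebraMap k F a)) :=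
    irreducible_X_pow_sub_C_of_mul_pow hh (hD ▸ irreducible_X_pow_sub_C_of_dvd hirr hgn)
  have hirrk : Irreducible (X ^ g - C a) :=
    (monic_X_pow_sub_C a hg).irreducible_of_irreducible_map (algebraMap k F) _
      (by simpa using hirrF)
  obtain ⟨s, rfl⟩ := hgn
  have hh' : algebraMap F K h ≠ 0 := (_root_.map_ne_zero _).2 hh
  have ht : (y ^ s / algebraMap F K h) ^ g = algebraMap k K a := by
    rw [div_pow, ← pow_mul, mul_comm s g, hy, hD, map_mul, map_pow,
      mul_div_cancel_right₀ _ (pow_ne_zero g hh'), ← IsScalarTower.algebraMap_apply]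
  exact ⟨_, ht, finrank_adjoin_of_irreducible_X_pow_sub_C hirrk ht⟩

theorem finrank_dvd_finrank_of_algHom {E : Type*} [Field E] [Algebra F E]
    (φ : E →ₐ[F] K) : finrank F E ∣ finrank F K := by
  let : Algebra E K := φ.toRingHom.toAlgebra
  have : IsScalarTower F E K := .of_algebraMap_eq' φ.comp_algebraMap.symm
  exact Dvd.intro _ (finrank_mul_finrank F E K)

theorem exists_pow_finrank_eq_algebraMap {E : Type*} [Field E] [Algebra F E]
    [Algebra E K] [IsScalarTower F E K] [FiniteDimensional F K] {D : F} {y : K}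
    (hy : y ^ finrank F K = algebraMap F K D)
    (hroots : ∀ ζ : K, ζ ^ finrank F K = 1 → ζ ∈ (algebraMap E K).range) :
    ∃ w : E, w ^ finrank F E = algebraMap F E D := by
  have hmul : finrank F E * finrank E K = finrank F K := finrank_mul_finrank F E K
  suffices y ^ finrank E K ∈ (algebraMap E K).range by
    obtain ⟨w, hw⟩ := this
    refine ⟨w, (algebraMap E K).injective ?_⟩
    rw [map_pow, hw, ← pow_mul, mul_comm, hmul, hy, ← IsScalarTower.algebraMap_apply]
  have : FiniteDimensional E K := .right F E K
  rcases eq_or_ne y 0 with rfl | hy0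
  · exact ⟨0, by rw [map_zero, zero_pow finrank_pos.ne']⟩
  set c : K := algebraMap E K (Algebra.norm E y)
  have hc0 : c ≠ 0 := (_root_.map_ne_zero _).2 (Algebra.norm_ne_zero_iff.2 hy0)
  have hc : c ^ finrank F K = (y ^ finrank E K) ^ finrank F K := by
    rw [← map_pow, ← map_pow, hy, IsScalarTower.algebraMap_apply F E K, Algebra.norm_algebraMap,
      map_pow, ← IsScalarTower.algebraMap_apply, ← hy, pow_right_comm]
  have hζ : (y ^ finrank E K / c) ^ finrank F K = 1 := by
    rw [div_pow, ← hc, div_self (pow_ne_zero _ hc0)]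
  rw [← div_mul_cancel₀ (y ^ finrank E K) hc0]
  exact mul_mem (hroots _ hζ) ⟨_, rfl⟩

theorem exists_pow_finrank_eq_algebraMap_of_algHom {E : Type*} [Field E] [Algebra F E]
    [FiniteDimensional F K] (φ : E →ₐ[F] K) {D : F} {y : K}
    (hy : y ^ finrank F K = algebraMap F K D)
    (hroots : ∀ ζ : K, ζ ^ finrank F K = 1 → ζ ∈ φ.range) :
    ∃ w : E, w ^ finrank F E = algebraMap F E D := by
  let : Algebra E K := φ.toRingHom.toAlgebra
  have : IsScalarTower F E K := .of_algebraMap_eq' φ.comp_algebraMap.symm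
  exact exists_pow_finrank_eq_algebraMap hy hroots

end Kummer

section RootMultiplicity

variable {k L : Type*} [Field k] [Field L] [Algebra k L]

theorem exists_rootMultiplicity_map_minpoly_eq_pow (q : ℕ) [ExpChar k q] {α : L}
    (hα : IsIntegral k α) :
    ∃ m, ((minpoly k α).map (algebraMap k L)).rootMultiplicity α = q ^ m := by
  have : ExpChar L q := expChar_of_injective_algebraMap (algebraMap k L).injective q
  obtain ⟨G, hG, m, hm⟩ := (minpoly.irreducible hα).hasSeparableContraction q
  have hsep : (G.map (algebraMap k L)).Separable := hG.map
  have hroot : IsRoot (G.map (algebraMap k L)) (α ^ q ^ m) := by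
    rw [IsRoot, eval_map_algebraMap, ← expand_aeval, hm, minpoly.aeval]
  have hsimple : (G.map (algebraMap k L)).rootMultiplicity (α ^ q ^ m) = 1 :=
    (rootMultiplicity_le_one_of_separable hsep _).antisymm
      ((rootMultiplicity_pos hsep.ne_zero).2 hroot)
  exact ⟨m, by rw [← hm, map_expand, rootMultiplicity_expand_pow, hsimple, mul_one]⟩

theorem rootMultiplicity_map_eq_minpoly_of_squarefree {f : k[X]} (hf : Squarefree f) {α : L}
    (hα : aeval α f = 0) :
    (f.map (algebraMap k L)).rootMultiplicity α =
      ((minpoly k α).map (algebraMap k L)).rootMultiplicity α := by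
  have hint : IsIntegral k α := IsAlgebraic.isIntegral ⟨f, hf.ne_zero, hα⟩
  obtain ⟨R, rfl⟩ := minpoly.dvd k α hα
  have hRα : aeval α R ≠ 0 := fun h =>
    (minpoly.irreducible hint).not_isUnit (hf _ (mul_dvd_mul_left _ (minpoly.dvd k α h)))
  have hne := (Polynomial.map_ne_zero_iff (algebraMap k L).injective).2 hf.ne_zero
  rw [Polynomial.map_mul] at hne ⊢
  rw [rootMultiplicity_mul hne, Nat.add_eq_left]
  exact rootMultiplicity_eq_zero (by rwa [IsRoot, eval_map_algebraMap])

theorem exists_root_rootMultiplicity_eq_pow [IsAlgClosed L] (q : ℕ) [ExpChar k q] {f : k[X]}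
    (hf : Squarefree f) (hunit : ¬IsUnit f) :
    ∃ (α : L) (m : ℕ), aeval α f = 0 ∧
      (f.map (algebraMap k L)).rootMultiplicity α = q ^ m := by
  obtain ⟨α, hα⟩ := IsAlgClosed.exists_aeval_eq_zero L f
    (mt isUnit_iff_degree_eq_zero.2 hunit)
  obtain ⟨m, hm⟩ := exists_rootMultiplicity_map_minpoly_eq_pow q
    (IsAlgebraic.isIntegral ⟨f, hf.ne_zero, hα⟩)
  exact ⟨α, m, hα, (rootMultiplicity_map_eq_minpoly_of_squarefree hf hα).trans hm⟩

end RootMultiplicity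

section Valuation

/-- The place of the rational function field `L(x)` at the point `α` of the affine line, given by
the prime ideal `(x - α)` of `L[x]`. -/
noncomputable def placeAt {L : Type*} [Field L] (α : L) : HeightOneSpectrum L[X] where
  asIdeal := Ideal.span {X - C α}
  isPrime := (Ideal.span_singleton_prime (X_sub_C_ne_zero α)).2 (prime_X_sub_C α)
  ne_bot := by simpa using X_sub_C_ne_zero α

theorem placeAt_valuation_algebraMap {L : Type*} [Field L] (α : L) {p : L[X]} (hp : p ≠ 0) :
    (placeAt α).valuation (RatFunc L) (algebraMap L[X] (RatFunc L) p) =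
      exp (-(p.rootMultiplicity α : ℤ)) := by
  obtain ⟨u, hu, hdvd⟩ := exists_eq_pow_rootMultiplicity_mul_and_not_dvd p hp α
  have hX : (placeAt α).intValuation (X - C α) = exp (-1 : ℤ) :=
    (placeAt α).intValuation_singleton (X_sub_C_ne_zero α) rfl
  have hu1 : (placeAt α).intValuation u = 1 :=
    HeightOneSpectrum.intValuation_eq_one_iff.2 (by rwa [placeAt, Ideal.mem_span_singleton])
  rw [HeightOneSpectrum.valuation_of_algebraMap]
  conv_lhs => rw [hu]
  rw [map_mul, map_pow, hX, hu1, mul_one, ← exp_nsmul, smul_neg, nsmul_one]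

theorem natCast_dvd_mul_of_valuation_eq {E ι : Type*} [Field E] (v : Valuation E ℤᵐ⁰) {e : ℕ}
    {w c : E} (hc : v c = 1) {F : ι → E} {a : ι → ℤ} {S : Finset ι} {i : ι} (hi : i ∈ S)
    (hF : ∀ j ∈ S, j ≠ i → v (F j) = 1) {m : ℤ} (hm : v (F i) = exp m)
    (hw : w ^ e = c * ∏ j ∈ S, F j ^ a j) : (e : ℤ) ∣ a i * m := by
  have hval : v w ^ e = exp (a i * m) := by
    rw [← map_pow, hw, map_mul, hc, one_mul, map_prod, Finset.prod_eq_single_of_mem i hi, map_zpow₀,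
      hm, ← exp_zsmul, smul_eq_mul]
    intro j hj hji
    rw [map_zpow₀, hF j hj hji, one_zpow]
  refine ⟨log (v w), ?_⟩
  rw [← nsmul_eq_mul, ← log_pow, hval, log_exp]

attribute [local instance] Polynomial.algebra
open scoped RatFunc

variable {k : Type*} [Field k] {ι : Type*}

theorem algebraMap_ratFunc_algebraMap {L : Type*} [Field L] [Algebra k L] (p : k[X]) :
    algebraMap (RatFunc k) (RatFunc L) (algebraMap k[X] (RatFunc k) p) =
      algebraMap L[X] (RatFunc L) (p.map (algebraMap k L)) := by
  rw [← IsScalarTower.algebraMap_apply, IsScalarTower.algebraMap_apply k[X] L[X] (RatFunc L)]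
  rfl

theorem algebraMap_ratFunc_C_mul_prod_zpow {L : Type*} [Field L] [Algebra k L] (c : k)
    (f : ι → k[X]) (a : ι → ℤ) (S : Finset ι) :
    algebraMap (RatFunc k) (RatFunc L)
        (RatFunc.C c * ∏ j ∈ S, algebraMap k[X] (RatFunc k) (f j) ^ a j) =
      RatFunc.C (algebraMap k L c) *
        ∏ j ∈ S, algebraMap L[X] (RatFunc L) ((f j).map (algebraMap k L)) ^ a j := by
  simp only [map_mul, map_prod, map_zpow₀, algebraMap_ratFunc_algebraMap,
    ← RatFunc.algebraMap_C, map_C]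

theorem coprime_expChar_of_natCast_ne_zero (q : ℕ) [hq : ExpChar k q] {e : ℕ} (he : (e : k) ≠ 0) :
    e.Coprime q := by
  cases hq with
  | zero => exact Nat.coprime_one_right e
  | prime hp =>
    rw [Nat.coprime_comm, hp.coprime_iff_not_dvd]
    exact fun hdvd => he ((CharP.cast_eq_zero_iff k q e).2 hdvd)

theorem natCast_dvd_of_pow_eq_of_isAlgClosed {L : Type*} [Field L] [Algebra k L] [IsAlgClosed L]
    {e : ℕ} (he : (e : k) ≠ 0) {c : L} (hc : c ≠ 0) {f : ι → k[X]} {a : ι → ℤ} {S : Finset ι}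
    {i : ι} (hi : i ∈ S) (hsq : Squarefree (f i)) (hunit : ¬IsUnit (f i))
    (hcop : ∀ j ∈ S, j ≠ i → IsCoprime (f j) (f i)) {w : RatFunc L}
    (hw : w ^ e = RatFunc.C c *
      ∏ j ∈ S, algebraMap L[X] (RatFunc L) ((f j).map (algebraMap k L)) ^ a j) :
    (e : ℤ) ∣ a i := by
  obtain ⟨q, hq⟩ := ExpChar.exists k
  obtain ⟨α, m, hα, hm⟩ := exists_root_rootMultiplicity_eq_pow (L := L) q hsq hunit
  have hmap {p : k[X]} (hp : p ≠ 0) := (Polynomial.map_ne_zero_iff (algebraMap k L).injective).2 hp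
  have hdvd : (e : ℤ) ∣ a i * -(q ^ m : ℕ) := by
    refine natCast_dvd_mul_of_valuation_eq ((placeAt α).valuation (RatFunc L)) ?_ hi ?_ ?_ hw
    · rw [← RatFunc.algebraMap_C, placeAt_valuation_algebraMap α (C_ne_zero.2 hc),
        rootMultiplicity_C, Nat.cast_zero, neg_zero, exp_zero]
    · intro j hj hji
      have hjα : aeval α (f j) ≠ 0 :=
        (aeval_ne_zero_of_isCoprime (hcop j hj hji) α).resolve_right (not_not.2 hα)
      have hj0 : f j ≠ 0 := fun h0 => hjα (by rw [h0, map_zero])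
      rw [placeAt_valuation_algebraMap α (hmap hj0), rootMultiplicity_eq_zero, Nat.cast_zero,
        neg_zero, exp_zero]
      rwa [IsRoot, eval_map_algebraMap]
    · rw [placeAt_valuation_algebraMap α (hmap hsq.ne_zero), hm]
  have hcoprime : IsCoprime (e : ℤ) (q ^ m : ℕ) :=
    Nat.isCoprime_iff_coprime.2 ((coprime_expChar_of_natCast_ne_zero q he).pow_right m)
  exact hcoprime.neg_right.dvd_of_dvd_mul_right hdvd

theorem natCast_dvd_of_pow_eq_algebraMap {k' : Type*} [Field k'] [Algebra k k'] {e : ℕ}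
    (he : (e : k) ≠ 0) {c : k} (hc : c ≠ 0) {f : ι → k[X]} {a : ι → ℤ} {S : Finset ι} {i : ι}
    (hi : i ∈ S) (hsq : Squarefree (f i)) (hunit : ¬IsUnit (f i))
    (hcop : ∀ j ∈ S, j ≠ i → IsCoprime (f j) (f i)) {w : RatFunc k'}
    (hw : w ^ e = algebraMap (RatFunc k) (RatFunc k')
      (RatFunc.C c * ∏ j ∈ S, algebraMap k[X] (RatFunc k) (f j) ^ a j)) : (e : ℤ) ∣ a i := by
  let L := AlgebraicClosure k'
  rw [algebraMap_ratFunc_C_mul_prod_zpow] at hw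
  have hwL := congrArg (algebraMap (RatFunc k') (RatFunc L)) hw
  rw [map_pow, algebraMap_ratFunc_C_mul_prod_zpow] at hwL
  simp only [Polynomial.map_map, ← IsScalarTower.algebraMap_eq,
    ← IsScalarTower.algebraMap_apply] at hwL
  exact natCast_dvd_of_pow_eq_of_isAlgClosed he ((_root_.map_ne_zero (algebraMap k L)).2 hc) hi hsq
    hunit hcop hwL

end Valuation

section ConstantExtension

open IntermediateField Module

attribute [local instance] Polynomial.algebra
open scoped RatFunc

variable {k : Type*} (k' : Type*) {K : Type*} [Field k] [Field k'] [Field K] [Algebra k k']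
  [Algebra k' K] [Algebra (RatFunc k) K] [Algebra k K] [IsScalarTower k (RatFunc k) K]
  [IsScalarTower k k' K] [Algebra.IsAlgebraic k k']

variable (k K) in
theorem transcendental_algebraMap_ratFuncX :
    Transcendental k' (algebraMap (RatFunc k) K RatFunc.X) :=
  ((transcendental_algebraMap_iff (algebraMap (RatFunc k) K).injective).2
    RatFunc.transcendental_X).extendScalars k'

theorem algEquivOfTranscendental_algebraMap_ratFunc (r : RatFunc k) :
    (RatFunc.algEquivOfTranscendental _ (transcendental_algebraMap_ratFuncX k k' K)
      (algebraMap (RatFunc k) (RatFunc k') r) : K) = algebraMap (RatFunc k) K r := by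
  set θ := RatFunc.algEquivOfTranscendental _ (transcendental_algebraMap_ratFuncX k k' K)
  have hpoly (p : k[X]) : (θ (algebraMap (RatFunc k) (RatFunc k') (algebraMap k[X] _ p)) : K) =
      algebraMap (RatFunc k) K (algebraMap k[X] _ p) := by
    rw [algebraMap_ratFunc_algebraMap, RatFunc.algEquivOfTranscendental_algebraMap,
      ← IntermediateField.aeval_coe, AdjoinSimple.coe_gen, aeval_map_algebraMap,
      aeval_algebraMap_apply, RatFunc.aeval_X_left_eq_algebraMap]
  induction r using RatFunc.induction_on with
  | f p q _ => simp only [map_div₀, IntermediateField.coe_div, hpoly]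

variable (k K) in
/-- For a field `K` over `k(x)` and an intermediate field `k'` of `K/k` algebraic over `k`, the
embedding of the rational function field `k'(x)` into `K` over `k(x)`; its image is the compositum
of `k'` and `k(x)`. -/
noncomputable def constantExtensionHom : RatFunc k' →ₐ[RatFunc k] K where
  __ := (algebraMap k'⟮algebraMap (RatFunc k) K RatFunc.X⟯ K).comp
    (RatFunc.algEquivOfTranscendental _ (transcendental_algebraMap_ratFuncX k k' K) : _ →+* _)
  commutes' := algEquivOfTranscendental_algebraMap_ratFunc k'

theorem constantExtensionHom_algebraMap (c : k') :
    constantExtensionHom k k' K (algebraMap k' (RatFunc k') c) = algebraMap k' K c :=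
  congrArg Subtype.val (AlgEquiv.commutes
    (RatFunc.algEquivOfTranscendental _ (transcendental_algebraMap_ratFuncX k k' K)) c)

variable (k K) in
theorem finrank_dvd_finrank_ratFunc : finrank k k' ∣ finrank (RatFunc k) K := by
  rw [← RatFunc.finrank_ratFunc_ratFunc k k']
  exact finrank_dvd_finrank_of_algHom (constantExtensionHom k k' K)

theorem exists_ratFunc_pow_finrank_eq [FiniteDimensional (RatFunc k) K] {D : RatFunc k} {y : K}
    (hy : y ^ finrank (RatFunc k) K = algebraMap (RatFunc k) K D)
    (hroots : ∀ ζ : K, ζ ^ finrank (RatFunc k) K = 1 → ζ ∈ (algebraMap k' K).range) :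
    ∃ w : RatFunc k', w ^ finrank k k' = algebraMap (RatFunc k) (RatFunc k') D := by
  rw [← RatFunc.finrank_ratFunc_ratFunc k k']
  refine exists_pow_finrank_eq_algebraMap_of_algHom (constantExtensionHom k k' K) hy fun ζ hζ => ?_
  obtain ⟨c, rfl⟩ := hroots ζ hζ
  exact ⟨algebraMap k' (RatFunc k') c, constantExtensionHom_algebraMap k' c⟩

end ConstantExtension

section Radical

open IntermediateField Module

theorem exists_prod_zpow_eq_pow {F ι : Type*} [Field F] {S : Finset ι} {p : ι → F}
    (hp : ∀ j ∈ S, p j ≠ 0) {a : ι → ℤ} {g : ℕ} (hg : ∀ j ∈ S, p j ≠ 1 → (g : ℤ) ∣ a j) :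
    ∃ h ≠ 0, ∏ j ∈ S, p j ^ a j = h ^ g := by
  refine ⟨∏ j ∈ S, p j ^ (a j / g), Finset.prod_ne_zero_iff.2 fun j hj => zpow_ne_zero _ (hp j hj),
    ?_⟩
  rw [← Finset.prod_pow]
  refine Finset.prod_congr rfl fun j hj => ?_
  by_cases hj1 : p j = 1
  · simp only [hj1, one_zpow, one_pow]
  · rw [← zpow_natCast, ← zpow_mul, Int.ediv_mul_cancel (hg j hj hj1)]

theorem adjoin_simple_eq_algebraicClosure {k K : Type*} [Field k] [Field K] [Algebra k K] {t : K}
    (ht : IsIntegral k t) (hdvd : finrank k (algebraicClosure k K) ∣ finrank k k⟮t⟯) :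
    k⟮t⟯ = algebraicClosure k K := by
  have : FiniteDimensional k k⟮t⟯ := adjoin.finiteDimensional ht
  have : FiniteDimensional k (algebraicClosure k K) :=
    FiniteDimensional.of_finrank_pos (Nat.pos_of_dvd_of_pos hdvd finrank_pos)
  exact eq_of_le_of_finrank_le (adjoin_simple_le_iff.2 (mem_algebraicClosure_iff'.2 ht))
    (Nat.le_of_dvd finrank_pos hdvd)

theorem finrank_algebraicClosure_dvd {k K ι : Type*} [Field k] [Field K] [Algebra (RatFunc k) K]
    [Algebra k K] [IsScalarTower k (RatFunc k) K] (hchar : (finrank (RatFunc k) K : k) ≠ 0)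
    {c : k} (hc : c ≠ 0) {f : ι → k[X]} {a : ι → ℤ} {S : Finset ι} {i : ι} (hi : i ∈ S)
    (hsq : Squarefree (f i)) (hunit : ¬IsUnit (f i))
    (hcop : ∀ j ∈ S, j ≠ i → IsCoprime (f j) (f i)) {y : K}
    (hy : y ^ finrank (RatFunc k) K = algebraMap (RatFunc k) K
      (RatFunc.C c * ∏ j ∈ S, algebraMap k[X] (RatFunc k) (f j) ^ a j)) :
    (finrank k (algebraicClosure k K) : ℤ) ∣ a i := by
  have hpos : 0 < finrank (RatFunc k) K :=
    Nat.pos_of_ne_zero fun h => hchar (by rw [h, Nat.cast_zero])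
  have : FiniteDimensional (RatFunc k) K := .of_finrank_pos hpos
  have hroots (ζ : K) (hζ : ζ ^ finrank (RatFunc k) K = 1) :
      ζ ∈ (algebraMap (algebraicClosure k K) K).range :=
    ⟨⟨ζ, mem_algebraicClosure_iff'.2 (.of_pow hpos (hζ ▸ isIntegral_one))⟩, rfl⟩
  obtain ⟨w, hw⟩ := exists_ratFunc_pow_finrank_eq (algebraicClosure k K) hy hroots
  have he : (finrank k (algebraicClosure k K) : k) ≠ 0 :=
    ne_zero_of_dvd_ne_zero hchar
      (Nat.cast_dvd_cast (finrank_dvd_finrank_ratFunc k (algebraicClosure k K) K))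
  exact natCast_dvd_of_pow_eq_algebraMap he hc hi hsq hunit hcop hw

end Radical

/-- The exact constant field of a radical function field `K = k(x,y)`, `y^n = D` with
squarefree decomposition `D = sgn(D)·∏_j f_j^j`: the exact constant field `k'` (the integral
closure of `k` in `K`) satisfies `[k' : k] = gcd(n, {j : f_j ≠ 1})` and
`k' = k(sgn(D)^{1/[k':k]})`, generated by a `[k':k]`-th root of `sgn(D)`. -/
theorem stmt18 (k : Type) [Field k] [DecidableEq (Polynomial k)] (n : ℕ) (hn : 1 < n) (hchar : (n : k) ≠ 0)
    (f : ℤ → Polynomial k) (S : Finset ℤ) (hfS : ∀ j ∉ S, f j = 1)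
    (hmonic : ∀ j, (f j).Monic) (hsqfree : ∀ j, Squarefree (f j))
    (hcop : ∀ j₁ j₂, j₁ ≠ j₂ → IsCoprime (f j₁) (f j₂))
    (sgn : k) (hsgn : sgn ≠ 0)
    (D : RatFunc k)
    (hDdecomp : D = RatFunc.C sgn *
      ∏ j ∈ S, (algebraMap (Polynomial k) (RatFunc k) (f j)) ^ j)
    (hirr : Irreducible ((Polynomial.X : Polynomial (RatFunc k)) ^ n - Polynomial.C D))
    (K : Type) [Field K] [Algebra (RatFunc k) K] [Algebra k K]
    [IsScalarTower k (RatFunc k) K]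
    (y : K) (hy : y ^ n = algebraMap (RatFunc k) K D)
    (hgen : Algebra.adjoin (RatFunc k) {y} = ⊤)
    -- `g = gcd(n, j | f_j ≠ 1)`
    (g : ℕ) (hg : g = Nat.gcd n ((S.filter fun j => f j ≠ 1).gcd Int.natAbs)) :
    Module.finrank k (integralClosure k K) = g ∧
    ∃ t : K, t ^ g = algebraMap k K sgn ∧
      Algebra.adjoin k {t} = integralClosure k K := by
  have hdeg : Module.finrank (RatFunc k) K = n := finrank_eq_of_adjoin_eq_top hirr hy hgen
  have hgn : g ∣ n := hg ▸ Nat.gcd_dvd_left _ _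
  have hgj (j : ℤ) (hj : j ∈ S) (hfj : algebraMap k[X] (RatFunc k) (f j) ≠ 1) : (g : ℤ) ∣ j := by
    rw [Int.natCast_dvd, hg]
    exact (Nat.gcd_dvd_right _ _).trans
      (Finset.gcd_dvd (Finset.mem_filter.2 ⟨hj, fun h1 => hfj (by rw [h1, map_one])⟩))
  obtain ⟨h, hh, hprod⟩ := exists_prod_zpow_eq_pow
    (fun j _ => RatFunc.algebraMap_ne_zero (hmonic j).ne_zero) hgj
  obtain ⟨t, ht, hrank⟩ := exists_pow_eq_and_finrank_adjoin_eq hirr hy hgn hh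
    (by rw [hDdecomp, hprod, RatFunc.algebraMap_eq_C])
  have hdvd : Module.finrank k (algebraicClosure k K) ∣ g := by
    rw [hg]
    refine Nat.dvd_gcd (hdeg ▸ finrank_dvd_finrank_ratFunc k _ K) (Finset.dvd_gcd fun j hj => ?_)
    obtain ⟨hjS, hfj⟩ := Finset.mem_filter.1 hj
    subst hdeg
    exact Int.natCast_dvd.1 (finrank_algebraicClosure_dvd hchar hsgn hjS (hsqfree j)
      (mt (hmonic j).isUnit_iff.1 hfj) (fun i _ hij => hcop i j hij) (hDdecomp ▸ hy))
  have htint : IsIntegral k t :=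
    .of_pow (Nat.pos_of_dvd_of_pos hgn (by lia)) (ht ▸ isIntegral_algebraMap)
  have hclosure := adjoin_simple_eq_algebraicClosure htint (hrank ▸ hdvd)
  refine ⟨hrank ▸ hclosure ▸ rfl, t, ht, ?_⟩
  rw [← IntermediateField.adjoin_simple_toSubalgebra_of_isAlgebraic htint.isAlgebraic, hclosure]
  rfl
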